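/- Non-conforming majorant for the solenoidal part: let ṽ ∈ L²(Ω;ℝ^N), set E := ∇û − A^{−1}ṽ, and let E = g + A^{−1}ψ with g ∈ 𝒢, ψ ∈ D₀ be its Helmholtz decomposition. Then for every u ∈ L²₋₁(Ω) with weak gradient ∇u ∈ L²(Ω;ℝ^N) such that û − u ∈ H¹°₋₁(Ω), ‖A^{−1}ψ‖_A ≤ M̃₊(A^{−1}ṽ,∇u) := ‖∇u − A^{−1}ṽ‖_A. -/

import Mathlib

open MeasureTheory Filter Topology
open scoped RealInnerProductSpace

noncomputable section

/-- Euclidean space `ℝ^N`. -/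
abbrev Euc (N : ℕ) := EuclideanSpace ℝ (Fin N)

/-- The Poincaré constant `c_N = 2/(N-2)`. -/
def cN (N : ℕ) : ℝ := 2 / ((N : ℝ) - 2)

variable {N : ℕ}

/-- Squared weighted `L²_s(Ω)` norm: `∫_Ω (1+|x|²)^s u(x)² dx`. -/
def sqL2 (Ω : Set (Euc N)) (s : ℝ) (u : Euc N → ℝ) : ℝ :=
  ∫ x in Ω, (1 + ‖x‖ ^ 2) ^ s * u x ^ 2

/-- Weighted `L²_s(Ω)` norm. -/
def nrmL2 (Ω : Set (Euc N)) (s : ℝ) (u : Euc N → ℝ) : ℝ :=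
  Real.sqrt (sqL2 Ω s u)

/-- Membership in the weighted space `L²_s(Ω)` (scalar functions). -/
def MemL2 (Ω : Set (Euc N)) (s : ℝ) (u : Euc N → ℝ) : Prop :=
  AEStronglyMeasurable u (volume.restrict Ω) ∧
    Integrable (fun x => (1 + ‖x‖ ^ 2) ^ s * u x ^ 2) (volume.restrict Ω)

/-- Squared weighted `L²_s(Ω;ℝ^N)` norm for vector fields. -/
def sqL2V (Ω : Set (Euc N)) (s : ℝ) (v : Euc N → Euc N) : ℝ :=
  ∫ x in Ω, (1 + ‖x‖ ^ 2) ^ s * ‖v x‖ ^ 2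

/-- Weighted `L²_s(Ω;ℝ^N)` norm for vector fields. -/
def nrmL2V (Ω : Set (Euc N)) (s : ℝ) (v : Euc N → Euc N) : ℝ :=
  Real.sqrt (sqL2V Ω s v)

/-- Membership in the weighted space `L²_s(Ω;ℝ^N)` (vector fields). -/
def MemL2V (Ω : Set (Euc N)) (s : ℝ) (v : Euc N → Euc N) : Prop :=
  AEStronglyMeasurable v (volume.restrict Ω) ∧
    Integrable (fun x => (1 + ‖x‖ ^ 2) ^ s * ‖v x‖ ^ 2) (volume.restrict Ω)

/-- Test functions: `φ ∈ C_c^∞(Ω)`. -/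
def IsTest (Ω : Set (Euc N)) (φ : Euc N → ℝ) : Prop :=
  ContDiff ℝ (⊤ : ℕ∞) φ ∧ HasCompactSupport φ ∧ tsupport φ ⊆ Ω

/-- `g` is the weak gradient of `u` on `Ω`:
`∫_Ω u ∇φ = −∫_Ω φ g` for all test functions `φ`. -/
def IsWeakGrad (Ω : Set (Euc N)) (u : Euc N → ℝ) (g : Euc N → Euc N) : Prop :=
  ∀ φ : Euc N → ℝ, IsTest Ω φ →
    (∫ x in Ω, u x • gradient φ x) = - ∫ x in Ω, φ x • g x

/-- `d` is the weak divergence of the vector field `v` on `Ω`: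
`∫_Ω v·∇φ = −∫_Ω d φ` for all test functions `φ`. -/
def IsWeakDiv (Ω : Set (Euc N)) (v : Euc N → Euc N) (d : Euc N → ℝ) : Prop :=
  ∀ φ : Euc N → ℝ, IsTest Ω φ →
    (∫ x in Ω, ⟪v x, gradient φ x⟫) = - ∫ x in Ω, d x * φ x

/-- `u ∈ H¹°₋₁(Ω)` with weak gradient `g`: `u ∈ L²₋₁(Ω)`, `g ∈ L²(Ω;ℝ^N)` is the weak
gradient of `u`, and `u` is approximated by test functions in the natural norms. -/
def MemH10 (Ω : Set (Euc N)) (u : Euc N → ℝ) (g : Euc N → Euc N) : Prop :=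
  MemL2 Ω (-1) u ∧ MemL2V Ω 0 g ∧ IsWeakGrad Ω u g ∧
    ∃ φ : ℕ → Euc N → ℝ, (∀ n, IsTest Ω (φ n)) ∧
      Tendsto (fun n => nrmL2 Ω (-1) (fun x => u x - φ n x)) atTop (𝓝 0) ∧
      Tendsto (fun n => nrmL2V Ω 0 (fun x => g x - gradient (φ n) x)) atTop (𝓝 0)

/-- `g ∈ 𝒢`, the closure in `L²(Ω;ℝ^N)` of `{∇φ : φ ∈ C_c^∞(Ω)}`. -/
def MemG (Ω : Set (Euc N)) (g : Euc N → Euc N) : Prop :=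
  MemL2V Ω 0 g ∧
    ∃ φ : ℕ → Euc N → ℝ, (∀ n, IsTest Ω (φ n)) ∧
      Tendsto (fun n => nrmL2V Ω 0 (fun x => g x - gradient (φ n) x)) atTop (𝓝 0)

/-- `ψ ∈ D₀`, the set of weakly divergence-free fields in `L²(Ω;ℝ^N)`. -/
def MemD0 (Ω : Set (Euc N)) (ψ : Euc N → Euc N) : Prop :=
  MemL2V Ω 0 ψ ∧
    ∀ φ : Euc N → ℝ, IsTest Ω φ → (∫ x in Ω, ⟪ψ x, gradient φ x⟫) = 0

/-- The coefficient matrix field `A : Ω → ℝ^{N×N}`: measurable, essentially bounded,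
symmetric, and uniformly coercive (`A(x)ξ·ξ ≥ α⁻²|ξ|²` for a.e. `x ∈ Ω`). -/
structure Coeff (N : ℕ) (Ω : Set (Euc N)) where
  A : Euc N → Euc N →L[ℝ] Euc N
  α : ℝ
  α_pos : 0 < α
  meas : ∀ ξ : Euc N, AEStronglyMeasurable (fun x => A x ξ) (volume.restrict Ω)
  bdd : ∃ C : ℝ, ∀ᵐ x ∂(volume.restrict Ω), ∀ ξ : Euc N, ‖A x ξ‖ ≤ C * ‖ξ‖
  symm : ∀ x : Euc N, ∀ ξ η : Euc N, ⟪A x ξ, η⟫ = ⟪ξ, A x η⟫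
  coer : ∀ᵐ x ∂(volume.restrict Ω), ∀ ξ : Euc N, α⁻¹ ^ 2 * ‖ξ‖ ^ 2 ≤ ⟪A x ξ, ξ⟫

/-- The weighted inner product `⟨v,w⟩_A = ∫_Ω A v · w dx`. -/
def ipA (Ω : Set (Euc N)) (A : Euc N → Euc N →L[ℝ] Euc N) (v w : Euc N → Euc N) : ℝ :=
  ∫ x in Ω, ⟪A x (v x), w x⟫

/-- The squared `A`-weighted norm `‖v‖²_A = ∫_Ω A v · v dx`. -/
def sqA (Ω : Set (Euc N)) (A : Euc N → Euc N →L[ℝ] Euc N) (v : Euc N → Euc N) : ℝ :=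
  ipA Ω A v v

/-- The `A`-weighted norm `‖v‖_A`. -/
def nrmA (Ω : Set (Euc N)) (A : Euc N → Euc N →L[ℝ] Euc N) (v : Euc N → Euc N) : ℝ :=
  Real.sqrt (sqA Ω A v)

/-- `w = A⁻¹ v` (a.e. on `Ω`), with `w ∈ L²(Ω;ℝ^N)`. -/
def IsAInv (Ω : Set (Euc N)) (A : Euc N → Euc N →L[ℝ] Euc N) (v w : Euc N → Euc N) : Prop :=
  MemL2V Ω 0 w ∧ ∀ᵐ x ∂(volume.restrict Ω), A x (w x) = v x

/-!
The residual `A⁻¹ψ = E - g` differs from any competitor `∇u - A⁻¹ṽ` by the field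
`g - ∇(û - u)`, a limit of gradients of test functions. Divergence-free fields are
`L²`-orthogonal to such limits, so this difference is `A`-orthogonal to `A⁻¹ψ`, and Pythagoras
gives the majorant.
-/

section Calculus

variable {𝕜 F : Type*} [RCLike 𝕜] [NormedAddCommGroup F] [InnerProductSpace 𝕜 F]
  [CompleteSpace F] {φ : F → 𝕜}

theorem continuous_gradient_of_contDiff {n : WithTop ℕ∞} (hφ : ContDiff 𝕜 n φ) (hn : n ≠ 0) :
    Continuous (gradient φ) :=
  (InnerProductSpace.toDual 𝕜 F).symm.continuous.comp (hφ.continuous_fderiv hn)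

theorem hasCompactSupport_gradient (hφ : HasCompactSupport φ) :
    HasCompactSupport (gradient φ) :=
  (hφ.fderiv (𝕜 := 𝕜)).comp_left (map_zero (InnerProductSpace.toDual 𝕜 F).symm)

end Calculus

section OperatorFields

variable {X 𝕜 E F : Type*} [MeasurableSpace X] {μ : Measure X} [NontriviallyNormedField 𝕜]
  [NormedAddCommGroup E] [NormedSpace 𝕜 E] [NormedAddCommGroup F] [NormedSpace 𝕜 F]
  {A : X → E →L[𝕜] F}

theorem memLp_clm_apply {p : ENNReal} {v : X → E} (hA : MemLp A ⊤ μ) (hv : MemLp v p μ) :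
    MemLp (fun x => A x (v x)) p μ :=
  (ContinuousLinearMap.id 𝕜 (E →L[𝕜] F)).memLp_of_bilin p hA hv

theorem aestronglyMeasurable_clm_of_forall_apply [CompleteSpace 𝕜] [FiniteDimensional 𝕜 E]
    (hA : ∀ v, AEStronglyMeasurable (fun x => A x v) μ) : AEStronglyMeasurable A μ := by
  let b := Module.finBasis 𝕜 E
  have hsum : A = fun x => ∑ i, (b.coord i).toContinuousLinearMap.smulRight (A x (b i)) := by
    ext x v
    conv_lhs => rw [← b.sum_repr v]
    simp [-Module.Basis.sum_repr]
  rw [hsum]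
  exact Finset.aestronglyMeasurable_fun_sum _ fun i _ =>
    (ContinuousLinearMap.smulRightL 𝕜 E F (b.coord i).toContinuousLinearMap).continuous
      |>.comp_aestronglyMeasurable (hA (b i))

end OperatorFields

section SquareIntegrable

variable {X E : Type*} [MeasurableSpace X] {μ : Measure X} [NormedAddCommGroup E]
  [InnerProductSpace ℝ E] {v w h d : X → E} {A : X → E →L[ℝ] E}

theorem integrable_inner_of_memLp_two (hv : MemLp v 2 μ) (hw : MemLp w 2 μ) :
    Integrable (fun x => ⟪v x, w x⟫) μ :=
  memLp_one_iff_integrable.1 ((innerSL ℝ).memLp_of_bilin 1 hv hw)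

theorem abs_integral_inner_le_sqrt_mul_sqrt (hv : MemLp v 2 μ) (hw : MemLp w 2 μ) :
    |∫ x, ⟪v x, w x⟫ ∂μ| ≤ √(∫ x, ‖v x‖ ^ 2 ∂μ) * √(∫ x, ‖w x‖ ^ 2 ∂μ) := by
  calc |∫ x, ⟪v x, w x⟫ ∂μ|
      ≤ ∫ x, ‖v x‖ * ‖w x‖ ∂μ :=
        norm_integral_le_of_norm_le (f := fun x => ⟪v x, w x⟫)
          (hv.norm.integrable_mul hw.norm) (.of_forall fun x => norm_inner_le_norm (v x) (w x))
    _ ≤ √(∫ x, ‖v x‖ ^ 2 ∂μ) * √(∫ x, ‖w x‖ ^ 2 ∂μ) := by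
        simpa [Real.sqrt_eq_rpow] using
          integral_mul_norm_le_Lp_mul_Lq Real.HolderConjugate.two_two
            (by simpa using hv) (by simpa using hw)

theorem inner_apply_self_add_two_mul_le_of_isPositive {T : E →L[ℝ] E} (hT : T.IsPositive)
    (a b : E) : ⟪T a, a⟫ + 2 * ⟪T a, b⟫ ≤ ⟪T (a + b), a + b⟫ := by
  have hcross : ⟪T b, a⟫ = ⟪T a, b⟫ := by
    rw [hT.inner_left_eq_inner_right, real_inner_comm]
  have hb : 0 ≤ ⟪T b, b⟫ := hT.inner_nonneg_left b
  rw [map_add, inner_add_left, inner_add_right, inner_add_right]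
  linarith

theorem integral_inner_apply_self_le_of_orthogonal (hA : MemLp A ⊤ μ)
    (hpos : ∀ᵐ x ∂μ, (A x).IsPositive) (hh : MemLp h 2 μ) (hd : MemLp d 2 μ)
    (horth : ∫ x, ⟪A x (h x), d x⟫ ∂μ = 0) :
    ∫ x, ⟪A x (h x), h x⟫ ∂μ ≤ ∫ x, ⟪A x (h x + d x), h x + d x⟫ ∂μ := by
  have hAh := memLp_clm_apply hA hh
  have hself := integrable_inner_of_memLp_two hAh hh
  have hcross := (integrable_inner_of_memLp_two hAh hd).const_mul 2
  calc ∫ x, ⟪A x (h x), h x⟫ ∂μ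
      = ∫ x, (⟪A x (h x), h x⟫ + 2 * ⟪A x (h x), d x⟫) ∂μ := by
        rw [integral_add hself hcross, integral_const_mul, horth, mul_zero, add_zero]
    _ ≤ ∫ x, ⟪A x (h x + d x), h x + d x⟫ ∂μ :=
        integral_mono_ae (hself.add hcross)
          (integrable_inner_of_memLp_two (memLp_clm_apply hA (hh.add hd)) (hh.add hd))
          (hpos.mono fun x hx => inner_apply_self_add_two_mul_le_of_isPositive hx (h x) (d x))

end SquareIntegrable

section FunctionSpaces

variable {Ω : Set (Euc N)} {φ : Euc N → ℝ} {v w g ψ : Euc N → Euc N}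

theorem memL2V_zero_iff_memLp : MemL2V Ω 0 v ↔ MemLp v 2 (volume.restrict Ω) := by
  simp only [MemL2V, Real.rpow_zero, one_mul]
  exact ⟨fun hv => (memLp_two_iff_integrable_sq_norm hv.1).2 hv.2,
    fun hv => ⟨hv.1, (memLp_two_iff_integrable_sq_norm hv.1).1 hv⟩⟩

theorem nrmL2V_zero_eq_sqrt_integral : nrmL2V Ω 0 v = √(∫ x in Ω, ‖v x‖ ^ 2) := by
  simp [nrmL2V, sqL2V]

theorem abs_integral_inner_le_nrmL2V_mul_nrmL2V (hv : MemLp v 2 (volume.restrict Ω))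
    (hw : MemLp w 2 (volume.restrict Ω)) :
    |∫ x in Ω, ⟪v x, w x⟫| ≤ nrmL2V Ω 0 v * nrmL2V Ω 0 w := by
  simpa only [nrmL2V_zero_eq_sqrt_integral] using abs_integral_inner_le_sqrt_mul_sqrt hv hw

theorem IsTest.memLp_gradient (hφ : IsTest Ω φ) {p : ENNReal} {μ : Measure (Euc N)}
    [IsFiniteMeasureOnCompacts μ] : MemLp (gradient φ) p μ :=
  (continuous_gradient_of_contDiff hφ.1 (by simp)).memLp_of_hasCompactSupport
    (hasCompactSupport_gradient hφ.2.1)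

theorem MemH10.memG {u : Euc N → ℝ} (hu : MemH10 Ω u g) : MemG Ω g :=
  let ⟨_, hg, _, φ, hφ, _, hlim⟩ := hu
  ⟨hg, φ, hφ, hlim⟩

theorem MemD0.integral_inner_eq_zero (hψ : MemD0 Ω ψ) (hg : MemG Ω g) :
    ∫ x in Ω, ⟪ψ x, g x⟫ = 0 := by
  obtain ⟨hg₂, φ, hφ, hlim⟩ := hg
  rw [memL2V_zero_iff_memLp] at hg₂
  have hψ₂ := memL2V_zero_iff_memLp.1 hψ.1
  have hbound (n : ℕ) : |∫ x in Ω, ⟪ψ x, g x⟫| ≤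
      nrmL2V Ω 0 ψ * nrmL2V Ω 0 (fun x => g x - gradient (φ n) x) := by
    have hφ₂ : MemLp (gradient (φ n)) 2 (volume.restrict Ω) := (hφ n).memLp_gradient
    calc |∫ x in Ω, ⟪ψ x, g x⟫|
        = |∫ x in Ω, ⟪ψ x, g x - gradient (φ n) x⟫| := by
          simp only [inner_sub_right]
          rw [integral_sub (integrable_inner_of_memLp_two hψ₂ hg₂)
            (integrable_inner_of_memLp_two hψ₂ hφ₂), hψ.2 _ (hφ n), sub_zero]
      _ ≤ _ := abs_integral_inner_le_nrmL2V_mul_nrmL2V hψ₂ (hg₂.sub hφ₂)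
  have hle := ge_of_tendsto' (hlim.const_mul (nrmL2V Ω 0 ψ)) hbound
  rwa [mul_zero, abs_nonpos_iff] at hle

theorem Coeff.memLp_top (M : Coeff N Ω) : MemLp M.A ⊤ (volume.restrict Ω) := by
  obtain ⟨C, hC⟩ := M.bdd
  refine memLp_top_of_bound (aestronglyMeasurable_clm_of_forall_apply M.meas) (max C 0) ?_
  filter_upwards [hC] with x hx
  refine (M.A x).opNorm_le_bound (le_max_right C 0) fun ξ => (hx ξ).trans ?_
  gcongr
  exact le_max_left C 0

theorem Coeff.ae_isPositive (M : Coeff N Ω) :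
    ∀ᵐ x ∂(volume.restrict Ω), (M.A x).IsPositive := by
  filter_upwards [M.coer] with x hx
  exact (ContinuousLinearMap.isPositive_iff _).2
    ⟨M.symm x, fun ξ => le_trans (by positivity) (hx ξ)⟩

end FunctionSpaces

theorem stmt_11_general {Ω : Set (Euc N)} {A : Euc N → Euc N →L[ℝ] Euc N}
    (hA : MemLp A ⊤ (volume.restrict Ω)) (hpos : ∀ᵐ x ∂(volume.restrict Ω), (A x).IsPositive)
    {E F g ψ : Euc N → Euc N} (hF : MemL2V Ω 0 F) (hEF : MemG Ω (fun x => E x - F x))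
    (hg : MemG Ω g) (hψ : MemD0 Ω ψ)
    (hdec : ∀ᵐ x ∂(volume.restrict Ω), A x (E x - g x) = ψ x) :
    nrmA Ω A (fun x => E x - g x) ≤ nrmA Ω A F := by
  have hF₂ := memL2V_zero_iff_memLp.1 hF
  have hEF₂ := memL2V_zero_iff_memLp.1 hEF.1
  have hg₂ := memL2V_zero_iff_memLp.1 hg.1
  have hψ₂ := memL2V_zero_iff_memLp.1 hψ.1
  have hE₂ : MemLp E 2 (volume.restrict Ω) := by
    simpa only [Pi.add_def, sub_add_cancel] using hEF₂.add hF₂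
  have horth : ∫ x in Ω, ⟪A x (E x - g x), g x - (E x - F x)⟫ = 0 := by
    calc ∫ x in Ω, ⟪A x (E x - g x), g x - (E x - F x)⟫
        = ∫ x in Ω, (⟪ψ x, g x⟫ - ⟪ψ x, E x - F x⟫) :=
          integral_congr_ae (hdec.mono fun x hx => by simp only [hx, inner_sub_right])
      _ = 0 := by
          rw [integral_sub (integrable_inner_of_memLp_two hψ₂ hg₂)
            (integrable_inner_of_memLp_two hψ₂ hEF₂), hψ.integral_inner_eq_zero hg,
            hψ.integral_inner_eq_zero hEF, sub_zero]
  have hle := integral_inner_apply_self_le_of_orthogonal hA hpos (hE₂.sub hg₂) (hg₂.sub hEF₂) horth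
  simp only [Pi.sub_apply, sub_add_sub_cancel, sub_sub_cancel] at hle
  exact Real.sqrt_le_sqrt hle

/-- Non-conforming majorant for the solenoidal part: `‖A⁻¹ψ‖_A ≤ ‖∇u − A⁻¹ṽ‖_A`
for all `u` with `û − u ∈ H¹°₋₁(Ω)`; here `A⁻¹ψ = E − g` a.e. -/
theorem stmt_11 (Ω : Set (Euc N)) (hΩ : IsOpen Ω) (hN : 3 ≤ N) (M : Coeff N Ω)
    (f : Euc N → ℝ) (hf : MemL2 Ω 1 f)
    (uh : Euc N → ℝ) (gu : Euc N → Euc N)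
    (huh : MemL2 Ω (-1) uh) (hgu : MemL2V Ω 0 gu) (hguw : IsWeakGrad Ω uh gu)
    (hweak : ∀ φ : Euc N → ℝ, IsTest Ω φ →
      (∫ x in Ω, ⟪M.A x (gu x), gradient φ x⟫) = ∫ x in Ω, f x * φ x)
    (vt : Euc N → Euc N) (hvt : MemL2V Ω 0 vt)
    (wt : Euc N → Euc N) (hwt : IsAInv Ω M.A vt wt)
    (g ψ : Euc N → Euc N) (hg : MemG Ω g) (hψ : MemD0 Ω ψ)
    (hdec : ∀ᵐ x ∂(volume.restrict Ω), M.A x ((gu x - wt x) - g x) = ψ x) :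
    ∀ (u : Euc N → ℝ) (gu' : Euc N → Euc N),
      MemL2 Ω (-1) u → MemL2V Ω 0 gu' → IsWeakGrad Ω u gu' →
      MemH10 Ω (fun x => uh x - u x) (fun x => gu x - gu' x) →
      nrmA Ω M.A (fun x => (gu x - wt x) - g x) ≤
        nrmA Ω M.A (fun x => gu' x - wt x) := by
  intro u gu' _ hgu' _ hdiff
  have hEF : MemG Ω (fun x => (gu x - wt x) - (gu' x - wt x)) := by
    simpa only [sub_sub_sub_cancel_right] using hdiff.memG
  exact stmt_11_general M.memLp_top M.ae_isPositive
    (memL2V_zero_iff_memLp.2 ((memL2V_zero_iff_memLp.1 hgu').sub (memL2V_zero_iff_memLp.1 hwt.1)))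
    hEF hg hψ hdec
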